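/- For every integer d ≥ 1 and every real m ∈ [0, 1], it holds that 0 ≤ 1 − g_d(m) ≤ 2^d·(1 − m)^{d+1}. -/

import Mathlib

noncomputable def g (d : ℕ) : ℝ → ℝ :=
  fun m => ∑ i ∈ Finset.range (d + 1),
    (1 / 4 ^ i : ℝ) * (Nat.choose (2 * i) i) * (m * (1 - m ^ 2) ^ i)

lemma coef_succ (d : ℕ) :
    (1 / 4 ^ (d+1) : ℝ) * (Nat.choose (2 * (d+1)) (d+1)) * (2 * (d + 1)) =
      (2 * d + 1) * ((1 / 4 ^ d : ℝ) * (Nat.choose (2 * d) d)) := by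
  have h := Nat.succ_mul_centralBinom_succ d
  simp only [Nat.centralBinom] at h
  have h' : ((d : ℝ) + 1) * (Nat.choose (2 * (d+1)) (d+1)) =
      2 * (2 * d + 1) * (Nat.choose (2 * d) d) := by exact_mod_cast h
  have h4 : (4 : ℝ) ^ d ≠ 0 := by positivity
  rw [pow_succ]
  field_simp
  linear_combination 2 * h'

lemma g_deriv (d : ℕ) (m : ℝ) :
    HasDerivAt (g d) ((2 * d + 1) * ((1 / 4 ^ d : ℝ) * (Nat.choose (2 * d) d)) *
      (1 - m ^ 2) ^ d) m := by
  induction d with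
  | zero =>
    have : g 0 = fun x => x := by funext x; simp [g]
    rw [this]
    simpa using hasDerivAt_id' m
  | succ d ih =>
    have e : g (d + 1) = fun x => g d x +
        (1 / 4 ^ (d+1) : ℝ) * (Nat.choose (2 * (d+1)) (d+1)) * (x * (1 - x ^ 2) ^ (d+1)) := by
      funext x
      simp only [g]
      rw [Finset.sum_range_succ]
    rw [e]
    have h1 : HasDerivAt (fun x : ℝ => 1 - x ^ 2) (-(2 * m)) m := by
      simpa using (hasDerivAt_pow 2 m).const_sub 1
    have h2 := ((hasDerivAt_id' m).fun_mul (h1.fun_pow (d+1))).const_mul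
      ((1 / 4 ^ (d+1) : ℝ) * (Nat.choose (2 * (d+1)) (d+1)))
    refine (ih.fun_add h2).congr_deriv ?_
    have c := coef_succ d
    rw [← c]
    generalize (1 / 4 ^ (d+1) : ℝ) * (Nat.choose (2 * (d+1)) (d+1)) = a
    push_cast
    ring

lemma coef_le (d : ℕ) :
    (2 * d + 1) * ((1 / 4 ^ d : ℝ) * (Nat.choose (2 * d) d)) ≤ d + 1 := by
  induction d with
  | zero => simp
  | succ d ih =>
    have c := coef_succ d
    rw [← c] at ih
    push_cast
    set a := (1 / 4 ^ (d+1) : ℝ) * (Nat.choose (2 * (d+1)) (d+1))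
    have hd : (0 : ℝ) ≤ d := by positivity
    have : a ≤ 1 / 2 := by
      by_contra hh
      push Not at hh
      nlinarith
    nlinarith

lemma g_one (d : ℕ) : g d 1 = 1 := by
  simp only [g]
  rw [Finset.sum_range_succ']
  simp

theorem stmt_4 (d : ℕ) (hd : 1 ≤ d) (m : ℝ) (hm : m ∈ Set.Icc (0 : ℝ) 1) :
    0 ≤ 1 - g d m ∧ 1 - g d m ≤ 2 ^ d * (1 - m) ^ (d + 1) := by
  have h1 : (1 : ℝ) ∈ Set.Icc (0 : ℝ) 1 := by simp
  constructor
  · have hmono : MonotoneOn (g d) (Set.Icc 0 1) := by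
      apply monotoneOn_of_hasDerivWithinAt_nonneg (convex_Icc 0 1)
        (fun x _ => (g_deriv d x).continuousAt.continuousWithinAt)
        (fun x _ => (g_deriv d x).hasDerivWithinAt)
      intro x hx
      rw [interior_Icc] at hx
      have : 0 ≤ 1 - x ^ 2 := by nlinarith [hx.1, hx.2]
      positivity
    have := hmono hm h1 hm.2
    rw [g_one] at this
    linarith
  · have hder (x : ℝ) : HasDerivAt (fun x => 2 ^ d * (1 - x) ^ (d + 1) + g d x)
        (2 ^ d * (((d + 1 : ℕ) : ℝ) * (1 - x) ^ d * (-1)) +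
          (2 * d + 1) * ((1 / 4 ^ d : ℝ) * (Nat.choose (2 * d) d)) * (1 - x ^ 2) ^ d) x := by
      have h2 : HasDerivAt (fun x : ℝ => 1 - x) (-1) x := by
        simpa using (hasDerivAt_id' x).const_sub 1
      exact ((h2.fun_pow (d+1)).const_mul (2 ^ d)).fun_add (g_deriv d x)
    have hanti : AntitoneOn (fun x => 2 ^ d * (1 - x) ^ (d + 1) + g d x) (Set.Icc 0 1) := by
      apply antitoneOn_of_hasDerivWithinAt_nonpos (convex_Icc 0 1)
        (fun x _ => (hder x).continuousAt.continuousWithinAt)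
        (fun x _ => (hder x).hasDerivWithinAt)
      intro x hx
      rw [interior_Icc] at hx
      have e : (1 - x ^ 2) ^ d = (1 + x) ^ d * (1 - x) ^ d := by
        rw [← mul_pow]; ring
      have p1 : (1 + x) ^ d ≤ 2 ^ d := pow_le_pow_left₀ (by linarith [hx.1]) (by linarith [hx.2]) d
      have p2 : 0 ≤ (1 - x) ^ d := pow_nonneg (by linarith [hx.2]) d
      have p3 : 0 ≤ (1 + x) ^ d := pow_nonneg (by linarith [hx.1]) d
      have p4 := mul_le_mul (coef_le d) p1 p3 (by positivity)
      have p5 := mul_le_mul_of_nonneg_right p4 p2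
      rw [e]
      push_cast
      linarith
    have := hanti hm h1 hm.2
    simp [g_one] at this
    linarith
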